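/- arXiv:2004.10443 — 2 statements merged into one kernel-verified Lean document; each statement's English description precedes it below -/
import Mathlib

section
/- Let A be a 2μ×2ν generic partitioned matrix over F(x) with 2×2 blocks A_{αβ} x_{αβ}, and let I be a set of index pairs (α,β) with A_{αβ} ≠ 0. If some row-block index α is incident to at least three edges of I (i.e., there exist three distinct β₁, β₂, β₃ with (α,βᵢ) ∈ I), then there exists an edge e ∈ I with rank A_{I∖{e}} = rank A_I; in particular I is not a matching. -/
open Matrix

/-- The `(2 × 2)`-type generic partitioned matrix with blocks `A_{αβ} x_{αβ}`,
restricted to blocks in `J`, over the rational function field `F(x)`. -/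
noncomputable def genPartMat {F : Type*} [Field F] {μ ν : ℕ}
    (A : Fin μ → Fin ν → Matrix (Fin 2) (Fin 2) F) (J : Finset (Fin μ × Fin ν)) :
    Matrix (Fin μ × Fin 2) (Fin ν × Fin 2)
      (FractionRing (MvPolynomial (Fin μ × Fin ν) F)) :=
  Matrix.of fun p q =>
    if (p.1, q.1) ∈ J then
      algebraMap (MvPolynomial (Fin μ × Fin ν) F) _
        (MvPolynomial.C (A p.1 q.1 p.2 q.2) * MvPolynomial.X (p.1, q.1))
    else 0

theorem gpm_exists_rows {K m n : Type*} [Field K] [Fintype m] [Fintype n]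
    (M : Matrix m n K) (r : ℕ) (hr : M.rank = r) :
    ∃ f : Fin r → m, LinearIndependent K (M.submatrix f id).row := by
  rw [Matrix.rank_eq_finrank_span_row] at hr
  subst hr
  obtain ⟨f, hf, -, hli⟩ := Submodule.exists_fun_fin_finrank_span_eq K (Set.range M.row)
  choose g hg using hf
  refine ⟨g, ?_⟩
  have : (M.submatrix g id).row = f := by
    funext i
    rw [← hg i]
    rfl
  rw [this]; exact hli

theorem gpm_exists_minor {K m n : Type*} [Field K] [Fintype m] [Fintype n]
    (M : Matrix m n K) : ∃ (f : Fin M.rank → m) (g : Fin M.rank → n), Function.Injective f ∧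
      (M.submatrix f g).det ≠ 0 := by
  obtain ⟨f, hf⟩ := gpm_exists_rows M M.rank rfl
  have hr : ((M.submatrix f id)ᵀ).rank = M.rank := by
    rw [Matrix.rank_transpose, hf.rank_matrix, Fintype.card_fin]
  obtain ⟨g, hg⟩ := gpm_exists_rows _ _ hr
  have hdet : (M.submatrix f g).det ≠ 0 := by
    rw [← Matrix.det_transpose]
    have : ((M.submatrix f id)ᵀ.submatrix g id) = (M.submatrix f g)ᵀ := rfl
    rw [this, Matrix.linearIndependent_rows_iff_isUnit, Matrix.isUnit_iff_isUnit_det] at hg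
    exact hg.ne_zero
  refine ⟨f, g, ?_, hdet⟩
  intro i j hij
  by_contra hne
  exact hdet (Matrix.det_zero_of_row_eq hne (by funext k; simp [hij]))

theorem gpm_le_rank {K m n : Type*} [Field K] [Fintype m] [Fintype n]
    (M : Matrix m n K) {r : ℕ} (f : Fin r → m) (g : Fin r → n)
    (h : (M.submatrix f g).det ≠ 0) : r ≤ M.rank := by
  have := Matrix.rank_submatrix_le M f g
  rwa [Matrix.rank_of_det_ne_zero h, Fintype.card_fin] at this

/-- Polynomial version of the partitioned matrix. -/
noncomputable def gpmPoly {F : Type*} [Field F] {μ ν : ℕ}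
    (A : Fin μ → Fin ν → Matrix (Fin 2) (Fin 2) F) (J : Finset (Fin μ × Fin ν)) :
    Matrix (Fin μ × Fin 2) (Fin ν × Fin 2) (MvPolynomial (Fin μ × Fin ν) F) :=
  Matrix.of fun p q => if (p.1, q.1) ∈ J then
    MvPolynomial.monomial (Finsupp.single (p.1, q.1) 1) (A p.1 q.1 p.2 q.2) else 0

section
variable {F : Type*} [Field F] {μ ν : ℕ} (A : Fin μ → Fin ν → Matrix (Fin 2) (Fin 2) F)

theorem gpm_map (J : Finset (Fin μ × Fin ν)) :
    genPartMat A J = (gpmPoly A J).map (algebraMap _ _) := by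
  ext p q
  simp only [genPartMat, gpmPoly, Matrix.of_apply, Matrix.map_apply]
  split_ifs
  · rw [MvPolynomial.C_mul_X_eq_monomial]
  · simp

theorem gpm_det (J : Finset (Fin μ × Fin ν)) {r : ℕ} (f : Fin r → Fin μ × Fin 2)
    (g : Fin r → Fin ν × Fin 2) :
    ((genPartMat A J).submatrix f g).det ≠ 0 ↔ ((gpmPoly A J).submatrix f g).det ≠ 0 := by
  rw [gpm_map, Matrix.submatrix_map, ← RingHom.mapMatrix_apply, ← RingHom.map_det, Ne, Ne,
    map_eq_zero_iff _ (IsFractionRing.injective _ _)]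

theorem gpm_prod (J : Finset (Fin μ × Fin ν)) {r : ℕ} (f : Fin r → Fin μ × Fin 2)
    (g : Fin r → Fin ν × Fin 2) :
    ∏ i, gpmPoly A J (f i) (g i) = if ∀ i, ((f i).1, (g i).1) ∈ J then
      MvPolynomial.monomial (∑ i, Finsupp.single ((f i).1, (g i).1) 1)
        (∏ i, A (f i).1 (g i).1 (f i).2 (g i).2) else 0 := by
  split_ifs with h
  · rw [MvPolynomial.monomial_sum_prod]
    exact Finset.prod_congr rfl fun i _ => by simp [gpmPoly, h i]
  · push Not at h
    obtain ⟨i, hi⟩ := h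
    exact Finset.prod_eq_zero (Finset.mem_univ i) (by simp [gpmPoly, hi])

theorem gpm_coeff_det (J : Finset (Fin μ × Fin ν)) {r : ℕ} (f : Fin r → Fin μ × Fin 2)
    (g : Fin r → Fin ν × Fin 2) (m : Fin μ × Fin ν →₀ ℕ) :
    MvPolynomial.coeff m ((gpmPoly A J).submatrix f g).det =
      ∑ σ : Equiv.Perm (Fin r), (Equiv.Perm.sign σ : ℤ) •
        MvPolynomial.coeff m (∏ i, gpmPoly A J (f i) (g (σ i))) := by
  rw [← Matrix.det_transpose, Matrix.det_apply, MvPolynomial.coeff_sum]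
  refine Finset.sum_congr rfl fun σ _ => ?_
  rw [Units.smul_def, ← MvPolynomial.coeffAddMonoidHom_apply, map_zsmul]
  rfl

theorem gpm_term (J : Finset (Fin μ × Fin ν)) {r : ℕ} (f : Fin r → Fin μ × Fin 2)
    (g : Fin r → Fin ν × Fin 2) (m : Fin μ × Fin ν →₀ ℕ)
    (h : MvPolynomial.coeff m (∏ i, gpmPoly A J (f i) (g i)) ≠ 0) :
    (∀ i, ((f i).1, (g i).1) ∈ J) ∧ m = ∑ i, Finsupp.single ((f i).1, (g i).1) 1 := by
  classical
  rw [gpm_prod] at h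
  split_ifs at h with h1
  · rw [MvPolynomial.coeff_monomial] at h
    split_ifs at h with h2
    · exact ⟨h1, h2.symm⟩
    · exact absurd rfl h
  · simp at h

theorem gpm_coeff_erase (I : Finset (Fin μ × Fin ν)) (e : Fin μ × Fin ν) {r : ℕ}
    (f : Fin r → Fin μ × Fin 2) (g : Fin r → Fin ν × Fin 2) (m : Fin μ × Fin ν →₀ ℕ)
    (hm : m e = 0) :
    MvPolynomial.coeff m ((gpmPoly A (I.erase e)).submatrix f g).det =
      MvPolynomial.coeff m ((gpmPoly A I).submatrix f g).det := by
  classical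
  rw [gpm_coeff_det, gpm_coeff_det]
  refine Finset.sum_congr rfl fun σ _ => ?_
  congr 1
  by_cases hms : m = ∑ i, Finsupp.single ((f i).1, (g (σ i)).1) 1
  · have hne : ∀ i, ((f i).1, (g (σ i)).1) ≠ e := by
      intro i hi
      rw [hms, Finsupp.finsetSum_apply, Finset.sum_eq_zero_iff] at hm
      have := hm i (Finset.mem_univ i)
      simp [hi] at this
    congr 1
    refine Finset.prod_congr rfl fun i _ => ?_
    simp [gpmPoly, hne i]
  · have h0 : ∀ J, MvPolynomial.coeff m (∏ i, gpmPoly A J (f i) (g (σ i))) = 0 := fun J => by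
      by_contra h
      exact hms (gpm_term A J f (fun i => g (σ i)) m h).2
    rw [h0, h0]

theorem gpm_exists_term (J : Finset (Fin μ × Fin ν)) {r : ℕ} (f : Fin r → Fin μ × Fin 2)
    (g : Fin r → Fin ν × Fin 2) (h : ((gpmPoly A J).submatrix f g).det ≠ 0) :
    ∃ m : Fin μ × Fin ν →₀ ℕ, MvPolynomial.coeff m ((gpmPoly A J).submatrix f g).det ≠ 0 ∧
      ∃ σ : Equiv.Perm (Fin r), (∀ i, ((f i).1, (g (σ i)).1) ∈ J) ∧
        m = ∑ i, Finsupp.single ((f i).1, (g (σ i)).1) 1 := by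
  obtain ⟨m, hm⟩ := MvPolynomial.ne_zero_iff.1 h
  refine ⟨m, hm, ?_⟩
  rw [gpm_coeff_det] at hm
  obtain ⟨σ, -, hσ⟩ := Finset.exists_ne_zero_of_sum_ne_zero hm
  refine ⟨σ, gpm_term A J f (fun i => g (σ i)) m ?_⟩
  intro h0
  rw [h0] at hσ
  simp at hσ

theorem gpm_rank_erase_le (I : Finset (Fin μ × Fin ν)) (e : Fin μ × Fin ν) :
    (genPartMat A (I.erase e)).rank ≤ (genPartMat A I).rank := by
  obtain ⟨f, g, -, hd⟩ := gpm_exists_minor (genPartMat A (I.erase e))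
  refine gpm_le_rank _ f g ?_
  rw [gpm_det] at hd ⊢
  obtain ⟨m, hm, σ, hσ, hms⟩ := gpm_exists_term A _ f g hd
  have hme : m e = 0 := by
    rw [hms, Finsupp.finsetSum_apply]
    refine Finset.sum_eq_zero fun i _ => ?_
    exact Finsupp.single_eq_of_ne (Finset.ne_of_mem_erase (hσ i)).symm
  rw [gpm_coeff_erase A I e f g m hme] at hm
  intro h0
  rw [h0] at hm
  simp at hm

theorem gpm_rank_le_erase (I : Finset (Fin μ × Fin ν)) (α : Fin μ) (β : Fin 3 → Fin ν)
    (hβ : Function.Injective β) :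
    ∃ k, (genPartMat A I).rank ≤ (genPartMat A (I.erase (α, β k))).rank := by
  obtain ⟨f, g, hf, hd⟩ := gpm_exists_minor (genPartMat A I)
  rw [gpm_det] at hd
  obtain ⟨m, hm, σ, hσ, hms⟩ := gpm_exists_term A _ f g hd
  obtain ⟨k, hk⟩ : ∃ k, m (α, β k) = 0 := by
    by_contra! hne
    have : ∀ k, ∃ i, ((f i).1, (g (σ i)).1) = (α, β k) := by
      intro k
      have h := hne k
      rw [hms, Finsupp.finsetSum_apply] at h
      obtain ⟨i, -, hi⟩ := Finset.exists_ne_zero_of_sum_ne_zero h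
      refine ⟨i, ?_⟩
      by_contra hc
      exact hi (Finsupp.single_eq_of_ne (Ne.symm hc))
    choose i hi using this
    have hinj : Function.Injective fun k => (f (i k)).2 := by
      intro k l hkl
      have h1 : f (i k) = f (i l) := Prod.ext
        ((congrArg Prod.fst (hi k)).trans (congrArg Prod.fst (hi l)).symm) hkl
      have h2 := hf h1
      have h3 := (hi k).symm.trans (h2 ▸ hi l)
      exact hβ (congrArg Prod.snd h3)
    have := Fintype.card_le_of_injective _ hinj
    simp at this
  refine ⟨k, gpm_le_rank _ f g ?_⟩
  rw [gpm_det]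
  rw [← gpm_coeff_erase A I _ f g m hk] at hm
  intro h0
  rw [h0] at hm
  simp at hm
end

/-- If in an edge set `I` some row-block index `α` is incident to three distinct edges,
then removing some edge of `I` does not change the rank of `A_I`; in particular
`I` is not a matching. -/
theorem genPartMat_not_matching_of_deg_ge_three {F : Type*} [Field F] {μ ν : ℕ}
    (A : Fin μ → Fin ν → Matrix (Fin 2) (Fin 2) F) (I : Finset (Fin μ × Fin ν))
    (hIE : ∀ e ∈ I, A e.1 e.2 ≠ 0)
    (h3 : ∃ (α : Fin μ) (β₁ β₂ β₃ : Fin ν), β₁ ≠ β₂ ∧ β₁ ≠ β₃ ∧ β₂ ≠ β₃ ∧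
      (α, β₁) ∈ I ∧ (α, β₂) ∈ I ∧ (α, β₃) ∈ I) :
    (∃ e ∈ I, (genPartMat A (I.erase e)).rank = (genPartMat A I).rank) ∧
      ¬ (∀ e ∈ I, (genPartMat A (I.erase e)).rank < (genPartMat A I).rank) := by
  obtain ⟨α, β₁, β₂, β₃, h12, h13, h23, h1, h2, h3⟩ := h3
  have hβ : Function.Injective ![β₁, β₂, β₃] := by
    intro i j hij
    fin_cases i <;> fin_cases j <;> simp_all
  obtain ⟨k, hk⟩ := gpm_rank_le_erase A I α _ hβ
  have hkI : (α, ![β₁, β₂, β₃] k) ∈ I := by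
    fin_cases k <;> simp_all
  have heq := le_antisymm (gpm_rank_erase_le A I (α, ![β₁, β₂, β₃] k)) hk
  exact ⟨⟨_, hkI, heq⟩, fun h => (h _ hkI).ne heq⟩
end

section
/- Let I be a matching of a (2×2)-type generic partitioned matrix A and let Ã_I be its canonical substitution (x_{αβ} ↦ 1 on I, 0 off I). Define ker_I(α) := F² if deg_I(α) = 0; ker_I(α) := ker_L(A_{αβ}) if α is incident to exactly one edge αβ of I and that edge has rank 1; and ker_I(α) := {0} otherwise. Then the left kernel of Ã_I equals ⊕_α ker_I(α) (and symmetrically the right kernel equals ⊕_β ker_I(β), with ker_R in place of ker_L). -/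
open Matrix

/-- The canonical substitution `Ã_I` of `A_I` (`x_{αβ} ↦ 1` on `I`, `0` off `I`). -/
def canonSubst {F : Type*} [Field F] {μ ν : ℕ}
    (A : Fin μ → Fin ν → Matrix (Fin 2) (Fin 2) F) (I : Finset (Fin μ × Fin ν)) :
    Matrix (Fin μ × Fin 2) (Fin ν × Fin 2) F :=
  Matrix.of fun p q => if (p.1, q.1) ∈ I then A p.1 q.1 p.2 q.2 else 0

open scoped Classical in
/-- `ker_I(α) ⊆ F²`: all of `F²` if `deg_I(α) = 0`; the left kernel of `A_{αβ}` if `α`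
is incident to exactly one edge `αβ` of `I` and that edge is rank-1; `{0}` otherwise. -/
noncomputable def kerIL {F : Type*} [Field F] {μ ν : ℕ}
    (A : Fin μ → Fin ν → Matrix (Fin 2) (Fin 2) F) (I : Finset (Fin μ × Fin ν))
    (α : Fin μ) : Submodule F (Fin 2 → F) :=
  if (I.filter fun e => e.1 = α).card = 0 then ⊤
  else if h : ∃ β, (I.filter fun e => e.1 = α) = {(α, β)} ∧ (A α β).rank = 1 then
    LinearMap.ker (A α h.choose).vecMulLinear
  else ⊥

open scoped Classical in
/-- `ker_I(β) ⊆ F²`: all of `F²` if `deg_I(β) = 0`; the right kernel of `A_{αβ}` if `β`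
is incident to exactly one edge `αβ` of `I` and that edge is rank-1; `{0}` otherwise. -/
noncomputable def kerIR {F : Type*} [Field F] {μ ν : ℕ}
    (A : Fin μ → Fin ν → Matrix (Fin 2) (Fin 2) F) (I : Finset (Fin μ × Fin ν))
    (β : Fin ν) : Submodule F (Fin 2 → F) :=
  if (I.filter fun e => e.2 = β).card = 0 then ⊤
  else if h : ∃ α, (I.filter fun e => e.2 = β) = {(α, β)} ∧ (A α β).rank = 1 then
    LinearMap.ker (A h.choose β).mulVecLin
  else ⊥

lemma ckRankKer {K m m' n : Type*} [Field K] [Fintype n]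
    (B : Matrix m n K) (B' : Matrix m' n K)
    (h : ∀ y : n → K, B *ᵥ y = 0 ↔ B' *ᵥ y = 0) : B.rank = B'.rank := by
  have h1 := LinearMap.finrank_range_add_finrank_ker B.mulVecLin
  have h2 := LinearMap.finrank_range_add_finrank_ker B'.mulVecLin
  have h3 : LinearMap.ker B.mulVecLin = LinearMap.ker B'.mulVecLin := by
    ext y
    simpa [LinearMap.mem_ker] using h y
  rw [h3] at h1
  unfold Matrix.rank
  omega

lemma ckRows {K m n : Type*} [Field K] [Finite m] [Fintype n] (B : Matrix m n K) (r : ℕ)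
    (hr : B.rank = r) :
    ∃ f : Fin r → m, LinearIndependent K (fun i => B (f i)) := by
  subst hr
  rw [Matrix.rank_eq_finrank_span_row]
  obtain ⟨v, hv, -, hl⟩ := Submodule.exists_fun_fin_finrank_span_eq K (Set.range B.row)
  choose f hf using hv
  refine ⟨f, ?_⟩
  have : (fun i => B (f i)) = v := funext hf
  rw [this]; exact hl

lemma ckMinor {K m n : Type*} [Field K] [Fintype m] [Fintype n] (B : Matrix m n K) (r : ℕ)
    (hr : B.rank = r) :
    ∃ (f : Fin r → m) (g : Fin r → n), (B.submatrix f g).det ≠ 0 := by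
  subst hr
  obtain ⟨f, hf⟩ := ckRows B _ rfl
  have h1 : (B.submatrix f id).rank = B.rank := by
    have := LinearIndependent.rank_matrix (M := B.submatrix f id) hf
    simpa using this
  have h2 : ((B.submatrix f id)ᵀ).rank = B.rank := by rw [Matrix.rank_transpose, h1]
  obtain ⟨g, hg⟩ := ckRows ((B.submatrix f id)ᵀ) _ h2
  refine ⟨f, g, ?_⟩
  have h3 : LinearIndependent K ((B.submatrix f g)ᵀ).row := hg
  rw [Matrix.linearIndependent_rows_iff_isUnit, Matrix.isUnit_iff_isUnit_det,
    Matrix.det_transpose] at h3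
  exact h3.ne_zero

lemma ckMinorLe {K m n : Type*} [Field K] [Fintype m] [Fintype n] (B : Matrix m n K) {r : ℕ}
    (f : Fin r → m) (g : Fin r → n) (h : (B.submatrix f g).det ≠ 0) : r ≤ B.rank := by
  have h1 := Matrix.rank_of_det_ne_zero h
  have h2 := Matrix.rank_submatrix_le B f g
  simp at h1
  omega

lemma ckAvoid {K m n : Type*} [Field K] [Fintype m] [Fintype n] (B : Matrix m n K) (r : ℕ)
    (hr : B.rank = r) (x : m → K) (hx : x ᵥ* B = 0) (p : m) (hp : x p ≠ 0) :
    ∃ (f : Fin r → m) (g : Fin r → n), (B.submatrix f g).det ≠ 0 ∧ ∀ i, f i ≠ p := by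
  classical
  have h : (B.submatrix (Subtype.val : {q // q ≠ p} → m) id).rank = r := by
    rw [← hr]
    apply ckRankKer
    intro y
    constructor
    · intro hy
      have h1 : ∀ q, q ≠ p → (B *ᵥ y) q = 0 := fun q hq => congrFun hy ⟨q, hq⟩
      have h2 : x ⬝ᵥ (B *ᵥ y) = 0 := by rw [Matrix.dotProduct_mulVec, hx, zero_dotProduct]
      rw [dotProduct, Finset.sum_eq_single p (fun q _ hq => by rw [h1 q hq, mul_zero])
        (by simp)] at h2
      funext q
      by_cases hq : q = p
      · subst hq
        simpa [hp] using h2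
      · exact h1 q hq
    · intro hy
      funext q
      exact congrFun hy q.1
  obtain ⟨f, g, hfg⟩ := ckMinor _ r h
  exact ⟨fun i => (f i).1, g, hfg, fun i => (f i).2⟩

/-- polynomial version of the generic partitioned matrix -/
noncomputable def ckPoly {F : Type*} [Field F] {μ ν : ℕ}
    (A : Fin μ → Fin ν → Matrix (Fin 2) (Fin 2) F) (J : Finset (Fin μ × Fin ν)) :
    Matrix (Fin μ × Fin 2) (Fin ν × Fin 2) (MvPolynomial (Fin μ × Fin ν) F) :=
  Matrix.of fun p q => MvPolynomial.monomial (Finsupp.single (p.1, q.1) 1) (canonSubst A J p q)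

section
variable {F : Type*} [Field F] {μ ν : ℕ}
    (A : Fin μ → Fin ν → Matrix (Fin 2) (Fin 2) F) (J : Finset (Fin μ × Fin ν)) {r : ℕ}
    (f : Fin r → Fin μ × Fin 2) (g : Fin r → Fin ν × Fin 2)

lemma ckGenDet : ((genPartMat A J).submatrix f g).det =
    algebraMap _ _ ((ckPoly A J).submatrix f g).det := by
  rw [RingHom.map_det]
  congr 1
  ext i j
  simp only [genPartMat, ckPoly, canonSubst, Matrix.submatrix_apply, Matrix.of_apply,
    RingHom.mapMatrix_apply, Matrix.map_apply]
  split_ifs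
  · rw [MvPolynomial.C_mul_X_eq_monomial]
  · simp

lemma ckGenDet_ne : ((genPartMat A J).submatrix f g).det ≠ 0 ↔
    ((ckPoly A J).submatrix f g).det ≠ 0 := by
  rw [ckGenDet, ne_eq, FaithfulSMul.algebraMap_eq_zero_iff]

lemma ckCanonDet : ((canonSubst A J).submatrix f g).det =
    MvPolynomial.eval (fun _ => 1) ((ckPoly A J).submatrix f g).det := by
  rw [RingHom.map_det]
  congr 1
  ext i j
  simp [ckPoly, MvPolynomial.eval_monomial]

lemma ckRankLe : (canonSubst A J).rank ≤ (genPartMat A J).rank := by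
  obtain ⟨f, g, h⟩ := ckMinor (canonSubst A J) _ rfl
  apply ckMinorLe _ f g
  rw [ckGenDet_ne]
  intro h0
  rw [ckCanonDet, h0, map_zero] at h
  exact h rfl

lemma ckProdMon {ι σ : Type*} (t : Finset ι) (s : ι → σ →₀ ℕ) (a : ι → F) :
    ∏ i ∈ t, MvPolynomial.monomial (s i) (a i)
      = MvPolynomial.monomial (∑ i ∈ t, s i) (∏ i ∈ t, a i) := by
  classical
  induction t using Finset.induction_on with
  | empty => simp
  | insert i t hi ih =>
    rw [Finset.prod_insert hi, Finset.sum_insert hi, Finset.prod_insert hi, ih,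
      MvPolynomial.monomial_mul]

lemma ckSupp (s : Fin μ × Fin ν →₀ ℕ)
    (hs : MvPolynomial.coeff s ((ckPoly A J).submatrix f g).det ≠ 0) :
    (∀ e, e ∉ J → s e = 0) ∧
    (∀ α, ∑ β, s (α, β) = ∑ i, if (f i).1 = α then 1 else 0) ∧
    (∀ β, ∑ α, s (α, β) = ∑ i, if (g i).1 = β then 1 else 0) := by
  classical
  rw [Matrix.det_apply, MvPolynomial.coeff_sum] at hs
  obtain ⟨σ, -, hσ⟩ := Finset.exists_ne_zero_of_sum_ne_zero hs
  simp only [Matrix.submatrix_apply, ckPoly, Matrix.of_apply, ckProdMon] at hσ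
  have hσ' : MvPolynomial.coeff s (MvPolynomial.monomial
      (∑ i, Finsupp.single ((f (σ i)).1, (g i).1) 1)
      (∏ i, canonSubst A J (f (σ i)) (g i))) ≠ 0 := by
    intro h0
    apply hσ
    rw [Units.smul_def, MvPolynomial.coeff_smul, h0, smul_zero]
  rw [MvPolynomial.coeff_monomial] at hσ'
  split_ifs at hσ' with hs'
  · subst hs'
    rw [Finset.prod_ne_zero_iff] at hσ'
    refine ⟨?_, ?_, ?_⟩
    · intro e he
      rw [Finsupp.finsetSum_apply]
      apply Finset.sum_eq_zero
      intro i _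
      rw [Finsupp.single_apply, if_neg]
      rintro rfl
      apply hσ' i (Finset.mem_univ _)
      simp [canonSubst, he]
    · intro α
      rw [← Equiv.sum_comp σ (fun i => if (f i).1 = α then 1 else 0)]
      simp only [Finsupp.finsetSum_apply, Finsupp.single_apply, Prod.mk.injEq]
      rw [Finset.sum_comm]
      apply Finset.sum_congr rfl
      intro i _
      by_cases h : (f (σ i)).1 = α <;> simp [h]
    · intro β
      simp only [Finsupp.finsetSum_apply, Finsupp.single_apply, Prod.mk.injEq]
      rw [Finset.sum_comm]
      apply Finset.sum_congr rfl
      intro i _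
      by_cases h : (g i).1 = β <;> simp [h]
  · exact absurd rfl hσ'

lemma ckPos (hr : (genPartMat A J).rank = r)
    (e : Fin μ × Fin ν) (he : (genPartMat A (J.erase e)).rank < (genPartMat A J).rank)
    (s : Fin μ × Fin ν →₀ ℕ)
    (hs : MvPolynomial.coeff s ((ckPoly A J).submatrix f g).det ≠ 0) : 1 ≤ s e := by
  classical
  have h0 : ((ckPoly A (J.erase e)).submatrix f g).det = 0 := by
    by_contra h
    have := ckMinorLe _ f g ((ckGenDet_ne A _ f g).2 h)
    omega
  have h1 : (MvPolynomial.X e : MvPolynomial (Fin μ × Fin ν) F) ∣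
      ((ckPoly A J).submatrix f g).det := by
    rw [← Ideal.mem_span_singleton, ← Ideal.Quotient.eq_zero_iff_mem, RingHom.map_det]
    rw [← map_zero (Ideal.Quotient.mk _), ← h0, RingHom.map_det]
    congr 1
    ext i j
    simp only [RingHom.mapMatrix_apply, Matrix.map_apply, Matrix.submatrix_apply, ckPoly,
      Matrix.of_apply]
    rw [Ideal.Quotient.eq, Ideal.mem_span_singleton]
    by_cases h : ((f i).1, (g j).1) = e
    · rw [h]
      apply dvd_sub <;>
      · rw [← MvPolynomial.C_mul_X_eq_monomial]
        exact dvd_mul_left _ _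
    · have : canonSubst A J (f i) (g j) = canonSubst A (J.erase e) (f i) (g j) := by
        simp [canonSubst, h]
      rw [this, sub_self]
      exact dvd_zero _
  obtain ⟨c, hc⟩ := h1
  rw [hc, MvPolynomial.coeff_X_mul'] at hs
  by_contra h
  apply hs
  rw [if_neg]
  simp; omega

/-- basic hypotheses about nonzero maximal minors -/
lemma ckInj (h : ((ckPoly A J).submatrix f g).det ≠ 0) :
    Function.Injective f ∧ Function.Injective g := by
  constructor
  · intro i j hij
    by_contra hne
    exact h (Matrix.det_zero_of_row_eq hne (by funext k; simp [hij]))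
  · intro i j hij
    by_contra hne
    exact h (Matrix.det_zero_of_column_eq hne (by intro k; simp [hij]))

end

lemma ckCount {r k : ℕ} (f : Fin r → Fin k × Fin 2) (hf : Function.Injective f) (α : Fin k) :
    (∑ i, if (f i).1 = α then 1 else 0) ≤ 2 := by
  classical
  rw [← Finset.card_filter]
  calc _ ≤ (Finset.univ : Finset (Fin 2)).card := by
        apply Finset.card_le_card_of_injOn (fun i => (f i).2) (by simp)
        intro i hi j hj hij
        simp at hi hj
        exact hf (Prod.ext (hi.trans hj.symm) hij)
    _ = 2 := by simp

lemma ckCount' {r k : ℕ} (f : Fin r → Fin k × Fin 2) (hf : Function.Injective f) (α : Fin k)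
    (a : Fin 2) (ha : ∀ i, f i ≠ (α, a)) :
    (∑ i, if (f i).1 = α then 1 else 0) ≤ 1 := by
  classical
  rw [← Finset.card_filter]
  calc _ ≤ ((Finset.univ : Finset (Fin 2)).erase a).card := by
        apply Finset.card_le_card_of_injOn (fun i => (f i).2)
        · intro i hi
          simp at hi
          simp
          intro h
          exact ha i (Prod.ext hi h)
        intro i hi j hj hij
        simp at hi hj
        exact hf (Prod.ext (hi.trans hj.symm) hij)
    _ = 1 := by simp

lemma ckUniqAux {k : ℕ} (s s' : Fin k → ℕ) (P : Fin k → Prop) (c : ℕ) (hc : c ≤ 2)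
    (h1 : ∑ x, s x = c) (h1' : ∑ x, s' x = c)
    (h2 : ∀ x, P x → 1 ≤ s x) (h2' : ∀ x, P x → 1 ≤ s' x)
    (h3 : ∀ x, ¬ P x → s x = 0) (h3' : ∀ x, ¬ P x → s' x = 0) (x : Fin k) : s x = s' x := by
  by_cases hx : P x
  · have key : ∀ (t : Fin k → ℕ) (z : Fin k), z ≠ x → t x + t z ≤ ∑ x, t x := by
      intro t z hz
      rw [← Finset.sum_pair hz.symm]
      exact Finset.sum_le_sum_of_subset (Finset.subset_univ _)
    by_cases hz : ∃ z, z ≠ x ∧ P z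
    · obtain ⟨z, hz, hPz⟩ := hz
      have := key s z hz
      have := key s' z hz
      have := h2 x hx
      have := h2' x hx
      have := h2 z hPz
      have := h2' z hPz
      omega
    · push Not at hz
      rw [Finset.sum_eq_single x (fun z _ hzx => h3 z (hz z hzx)) (by simp)] at h1
      rw [Finset.sum_eq_single x (fun z _ hzx => h3' z (hz z hzx)) (by simp)] at h1'
      omega
  · rw [h3 x hx, h3' x hx]

lemma ckCardLe {k : ℕ} (s : Fin k → ℕ) (P : Fin k → Prop) [DecidablePred P]
    (h2 : ∀ x, P x → 1 ≤ s x) : (Finset.univ.filter P).card ≤ ∑ x, s x := by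
  rw [Finset.card_filter]
  apply Finset.sum_le_sum
  intro x _
  split_ifs with h
  · exact h2 x h
  · exact Nat.zero_le _

section
variable {F : Type*} [Field F] {μ ν : ℕ}
    (A : Fin μ → Fin ν → Matrix (Fin 2) (Fin 2) F) (I : Finset (Fin μ × Fin ν))

lemma ckDegLe
    (hmatch : ∀ e ∈ I, (genPartMat A (I.erase e)).rank < (genPartMat A I).rank)
    {r : ℕ} (hr : (genPartMat A I).rank = r)
    (f : Fin r → Fin μ × Fin 2) (g : Fin r → Fin ν × Fin 2)
    (h : ((ckPoly A I).submatrix f g).det ≠ 0) :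
    (∀ α, (Finset.univ.filter fun β => (α, β) ∈ I).card ≤ ∑ i, if (f i).1 = α then 1 else 0) ∧
    (∀ β, (Finset.univ.filter fun α => (α, β) ∈ I).card ≤ ∑ i, if (g i).1 = β then 1 else 0) := by
  obtain ⟨s, hs⟩ := MvPolynomial.ne_zero_iff.1 h
  obtain ⟨-, h1, h2⟩ := ckSupp A I f g s hs
  have h3 := fun e he => ckPos A I f g hr e (hmatch e he) s hs
  constructor
  · intro α
    rw [← h1]
    exact ckCardLe _ _ fun β hβ => h3 _ hβ
  · intro β
    rw [← h2]
    exact ckCardLe (fun α => s (α, β)) _ fun α hα => h3 _ hα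

lemma ckRankEq
    (hmatch : ∀ e ∈ I, (genPartMat A (I.erase e)).rank < (genPartMat A I).rank) :
    (canonSubst A I).rank = (genPartMat A I).rank := by
  apply le_antisymm (ckRankLe A I)
  obtain ⟨f, g, h⟩ := ckMinor (genPartMat A I) _ rfl
  apply ckMinorLe _ f g
  rw [ckGenDet_ne] at h
  obtain ⟨hf, -⟩ := ckInj A I f g h
  obtain ⟨s, hs⟩ := MvPolynomial.ne_zero_iff.1 h
  have hD : ((ckPoly A I).submatrix f g).det =
      MvPolynomial.monomial s (MvPolynomial.coeff s ((ckPoly A I).submatrix f g).det) := by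
    ext m
    rw [MvPolynomial.coeff_monomial]
    split_ifs with hm
    · rw [hm]
    · by_contra hm'
      apply hm
      obtain ⟨a1, a2, -⟩ := ckSupp A I f g s hs
      obtain ⟨b1, b2, -⟩ := ckSupp A I f g m hm'
      ext ⟨α, β⟩
      exact ckUniqAux (fun β => s (α, β)) (fun β => m (α, β)) (fun β => (α, β) ∈ I) _
        (ckCount f hf α) (a2 α) (b2 α)
        (fun x hx => ckPos A I f g rfl _ (hmatch _ hx) s hs)
        (fun x hx => ckPos A I f g rfl _ (hmatch _ hx) m hm')
        (fun x hx => a1 _ hx) (fun x hx => b1 _ hx) β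
  rw [ckCanonDet, hD]
  simpa [MvPolynomial.eval_monomial] using hs

lemma ckTwo {k : ℕ} (P : Fin k → Prop) [DecidablePred P] {a b : Fin k} (hab : a ≠ b)
    (ha : P a) (hb : P b) : 2 ≤ (Finset.univ.filter P).card := by
  rw [← Finset.card_pair hab]
  apply Finset.card_le_card
  intro x hx
  simp at hx
  rcases hx with rfl | rfl <;> simpa

lemma ckProps
    (hmatch : ∀ e ∈ I, (genPartMat A (I.erase e)).rank < (genPartMat A I).rank) :
    (∀ e ∈ I, (canonSubst A (I.erase e)).rank < (canonSubst A I).rank) ∧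
    (∀ x, x ᵥ* canonSubst A I = 0 → ∀ α β β', β ≠ β' → (α, β) ∈ I → (α, β') ∈ I →
      ∀ i, x (α, i) = 0) ∧
    (∀ y, canonSubst A I *ᵥ y = 0 → ∀ β α α', α ≠ α' → (α, β) ∈ I → (α', β) ∈ I →
      ∀ i, y (β, i) = 0) ∧
    (∀ α, (Finset.univ.filter fun β => (α, β) ∈ I).card ≤ 2) ∧
    (∀ β, (Finset.univ.filter fun α => (α, β) ∈ I).card ≤ 2) := by
  have hR := ckRankEq A I hmatch
  have hne : ∀ {r : ℕ} (f : Fin r → Fin μ × Fin 2) (g : Fin r → Fin ν × Fin 2),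
      ((canonSubst A I).submatrix f g).det ≠ 0 → ((ckPoly A I).submatrix f g).det ≠ 0 := by
    intro r f g h h0
    rw [ckCanonDet, h0, map_zero] at h
    exact h rfl
  refine ⟨?_, ?_, ?_, ?_⟩
  · intro e he
    rw [hR]
    exact (ckRankLe A _).trans_lt (hmatch e he)
  · intro x hx α β β' hb h1 h2 i
    by_contra h
    obtain ⟨f, g, hd, hf⟩ := ckAvoid _ _ hR x hx _ h
    have hd' := hne f g hd
    have a1 := (ckDegLe A I hmatch rfl f g hd').1 α
    have a2 := ckCount' f (ckInj A I f g hd').1 α i hf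
    have a3 := ckTwo (fun β => (α, β) ∈ I) hb h1 h2
    omega
  · intro y hy β α α' hb h1 h2 i
    by_contra h
    obtain ⟨g, f, hd, hf⟩ := ckAvoid (canonSubst A I)ᵀ _
      ((Matrix.rank_transpose _).trans hR) y (by rw [Matrix.vecMul_transpose, hy]) _ h
    rw [← Matrix.transpose_submatrix, Matrix.det_transpose] at hd
    have hd' := hne f g hd
    have a1 := (ckDegLe A I hmatch rfl f g hd').2 β
    have a2 := ckCount' g (ckInj A I f g hd').2 β i hf
    have a3 := ckTwo (fun α => (α, β) ∈ I) hb h1 h2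
    omega
  · obtain ⟨f, g, h⟩ := ckMinor (genPartMat A I) _ rfl
    rw [ckGenDet_ne] at h
    obtain ⟨hf, hg⟩ := ckInj A I f g h
    obtain ⟨h1, h2⟩ := ckDegLe A I hmatch rfl f g h
    exact ⟨fun α => (h1 α).trans (ckCount f hf α), fun β => (h2 β).trans (ckCount g hg β)⟩
end

lemma ckRankTwo {F : Type*} [Field F] (M : Matrix (Fin 2) (Fin 2) F) (h0 : M ≠ 0)
    (h1 : M.rank ≠ 1) : M.det ≠ 0 := by
  have h2 : M.rank ≤ 2 := by simpa using M.rank_le_card_width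
  have h3 : M.rank ≠ 0 := by
    intro h
    apply h0
    have : LinearMap.range M.mulVecLin = ⊥ := by
      rw [← Submodule.finrank_eq_zero (R := F)]; exact h
    rw [LinearMap.range_eq_bot] at this
    exact Matrix.toLin'.injective (by rw [Matrix.toLin'_apply', this, map_zero])
  have h4 : M.rank = 2 := by omega
  obtain ⟨f, hf⟩ := ckRows M 2 h4
  have hinj : Function.Injective f := by
    intro i j hij
    exact hf.injective (by simp [hij])
  let e : Equiv.Perm (Fin 2) := Equiv.ofBijective f (Finite.injective_iff_bijective.1 hinj)
  have h5 : LinearIndependent F (M.submatrix e id).row := hf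
  rw [Matrix.linearIndependent_rows_iff_isUnit, Matrix.isUnit_iff_isUnit_det,
    Matrix.det_permute] at h5
  intro h
  rw [h, mul_zero] at h5
  exact not_isUnit_zero h5

section
variable {F : Type*} [Field F] {μ ν : ℕ}
    (A : Fin μ → Fin ν → Matrix (Fin 2) (Fin 2) F) (I : Finset (Fin μ × Fin ν))

lemma ckKerIL (hIE : ∀ e ∈ I, A e.1 e.2 ≠ 0) (α : Fin μ) (v : Fin 2 → F) :
    v ∈ kerIL A I α ↔ (∀ β, (α, β) ∈ I → v ᵥ* A α β = 0) ∧
      (∀ β β', β ≠ β' → (α, β) ∈ I → (α, β') ∈ I → v = 0) := by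
  classical
  have hfil : ∀ β, (I.filter fun e => e.1 = α) = {(α, β)} ↔
      (α, β) ∈ I ∧ ∀ β', (α, β') ∈ I → β' = β := by
    intro β
    rw [Finset.ext_iff]
    constructor
    · intro h
      exact ⟨(Finset.mem_filter.1 ((h (α, β)).2 (by simp))).1,
        fun β' hb => by simpa [hb] using h (α, β')⟩
    · rintro ⟨h1, h2⟩ ⟨a, b⟩
      simp only [Finset.mem_filter, Finset.mem_singleton, Prod.mk.injEq]
      constructor
      · rintro ⟨h3, rfl⟩
        exact ⟨rfl, h2 b h3⟩
      · rintro ⟨rfl, rfl⟩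
        exact ⟨h1, rfl⟩
  unfold kerIL
  split_ifs with h h'
  · have h0 : ∀ β, (α, β) ∉ I := by
      intro β hb
      rw [Finset.card_eq_zero] at h
      have : (α, β) ∈ (I.filter fun e => e.1 = α) := by simp [hb]
      rw [h] at this
      simp at this
    simp [h0]
  · have hs := h'.choose_spec
    have hb := (hfil _).1 hs.1
    rw [LinearMap.mem_ker, Matrix.vecMulLinear_apply]
    constructor
    · intro hv
      refine ⟨fun β h1 => by rw [hb.2 β h1]; exact hv, fun β β' hne h1 h2 => ?_⟩
      exact absurd ((hb.2 β h1).trans (hb.2 β' h2).symm) hne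
    · intro hv
      exact hv.1 _ hb.1
  · rw [Submodule.mem_bot]
    constructor
    · rintro rfl
      simp
    · rintro ⟨h1, h2⟩
      obtain ⟨⟨a, b⟩, he⟩ := Finset.card_ne_zero.1 h
      rw [Finset.mem_filter] at he
      obtain ⟨he, rfl⟩ := he
      by_cases hb : ∃ β', β' ≠ b ∧ (a, β') ∈ I
      · obtain ⟨β', hne, hb⟩ := hb
        exact h2 _ _ hne hb he
      · push Not at hb
        push Not at h'
        have hr := h' b ((hfil b).2 ⟨he, fun β' hb' => by_contra fun hne => hb β' hne hb'⟩)
        have hd := ckRankTwo _ (hIE _ he) hr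
        exact Matrix.eq_zero_of_vecMul_eq_zero hd (h1 b he)

lemma ckKerIR (hIE : ∀ e ∈ I, A e.1 e.2 ≠ 0) (β : Fin ν) (v : Fin 2 → F) :
    v ∈ kerIR A I β ↔ (∀ α, (α, β) ∈ I → A α β *ᵥ v = 0) ∧
      (∀ α α', α ≠ α' → (α, β) ∈ I → (α', β) ∈ I → v = 0) := by
  classical
  have hfil : ∀ α, (I.filter fun e => e.2 = β) = {(α, β)} ↔
      (α, β) ∈ I ∧ ∀ α', (α', β) ∈ I → α' = α := by
    intro α
    rw [Finset.ext_iff]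
    constructor
    · intro h
      exact ⟨(Finset.mem_filter.1 ((h (α, β)).2 (by simp))).1,
        fun α' hb => by simpa [hb] using h (α', β)⟩
    · rintro ⟨h1, h2⟩ ⟨a, b⟩
      simp only [Finset.mem_filter, Finset.mem_singleton, Prod.mk.injEq]
      constructor
      · rintro ⟨h3, rfl⟩
        exact ⟨h2 a h3, rfl⟩
      · rintro ⟨rfl, rfl⟩
        exact ⟨h1, rfl⟩
  unfold kerIR
  split_ifs with h h'
  · have h0 : ∀ α, (α, β) ∉ I := by
      intro α hb
      rw [Finset.card_eq_zero] at h
      have : (α, β) ∈ (I.filter fun e => e.2 = β) := by simp [hb]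
      rw [h] at this
      simp at this
    simp [h0]
  · have hs := h'.choose_spec
    have hb := (hfil _).1 hs.1
    rw [LinearMap.mem_ker, Matrix.mulVecLin_apply]
    constructor
    · intro hv
      refine ⟨fun α h1 => by rw [hb.2 α h1]; exact hv, fun α α' hne h1 h2 => ?_⟩
      exact absurd ((hb.2 α h1).trans (hb.2 α' h2).symm) hne
    · intro hv
      exact hv.1 _ hb.1
  · rw [Submodule.mem_bot]
    constructor
    · rintro rfl
      simp
    · rintro ⟨h1, h2⟩
      obtain ⟨⟨a, b⟩, he⟩ := Finset.card_ne_zero.1 h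
      rw [Finset.mem_filter] at he
      obtain ⟨he, rfl⟩ := he
      by_cases hb : ∃ α', α' ≠ a ∧ (α', b) ∈ I
      · obtain ⟨α', hne, hb⟩ := hb
        exact h2 _ _ hne hb he
      · push Not at hb
        push Not at h'
        have hr := h' a ((hfil a).2 ⟨he, fun α' hb' => by_contra fun hne => hb α' hne hb'⟩)
        have hd := ckRankTwo _ (hIE _ he) hr
        exact Matrix.eq_zero_of_mulVec_eq_zero hd (h1 a he)

lemma ckMulVec (y : Fin ν × Fin 2 → F) (α : Fin μ) (i : Fin 2) :
    (canonSubst A I *ᵥ y) (α, i) =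
      ∑ β, if (α, β) ∈ I then (A α β *ᵥ fun j => y (β, j)) i else 0 := by
  simp only [Matrix.mulVec, dotProduct, canonSubst, Matrix.of_apply, Fintype.sum_prod_type]
  apply Finset.sum_congr rfl
  intro β _
  split_ifs <;> simp

lemma ckVecMul (x : Fin μ × Fin 2 → F) (β : Fin ν) (j : Fin 2) :
    (x ᵥ* canonSubst A I) (β, j) =
      ∑ α, if (α, β) ∈ I then ((fun i => x (α, i)) ᵥ* A α β) j else 0 := by
  simp only [Matrix.vecMul, dotProduct, canonSubst, Matrix.of_apply, Fintype.sum_prod_type]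
  apply Finset.sum_congr rfl
  intro β _
  split_ifs <;> simp

/-- A full rank edge at a degree one row vertex has no neighbour at its column vertex. -/
lemma ckFull (hF : ∀ e ∈ I, (canonSubst A (I.erase e)).rank < (canonSubst A I).rank)
    (α α' : Fin μ) (β : Fin ν) (hne : α' ≠ α) (h1 : (α, β) ∈ I) (h2 : (α', β) ∈ I)
    (hdeg : ∀ β', (α, β') ∈ I → β' = β) : (A α β).det = 0 := by
  by_contra hd
  have key : ∀ J ⊆ I, (α, β) ∈ J → ∀ y, canonSubst A J *ᵥ y = 0 → (fun j => y (β, j)) = 0 := by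
    intro J hJ hm y hy
    apply Matrix.eq_zero_of_mulVec_eq_zero hd
    funext i
    have := congrFun hy (α, i)
    rw [ckMulVec, Finset.sum_eq_single β _ (by simp), if_pos hm] at this
    · exact this
    · intro b _ hb
      rw [if_neg]
      intro h
      exact hb (hdeg b (hJ h))
  have hm : (α, β) ∈ I.erase (α', β) := by
    simp [h1, hne.symm]
  have hsame : ∀ y : Fin ν × Fin 2 → F, (fun j => y (β, j)) = 0 →
      canonSubst A (I.erase (α', β)) *ᵥ y = canonSubst A I *ᵥ y := by
    intro y hy
    funext ⟨a, i⟩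
    rw [ckMulVec, ckMulVec]
    apply Finset.sum_congr rfl
    intro b _
    by_cases hb : b = β
    · subst hb
      rw [hy]; simp
    · simp [hb]
  refine (hF _ h2).ne (ckRankKer _ _ fun y => ?_)
  constructor
  · intro hy
    rw [← hsame y (key _ (Finset.erase_subset _ _) hm y hy), hy]
  · intro hy
    rw [hsame y (key _ subset_rfl h1 y hy), hy]

lemma ckCross (M : Matrix (Fin 2) (Fin 2) F) (hM : M.det = 0) (p : Fin 2 → F) :
    M *ᵥ ![-(p ᵥ* M) 1, (p ᵥ* M) 0] = 0 := by
  rw [Matrix.det_fin_two] at hM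
  funext i
  fin_cases i <;> simp [Matrix.mulVec, Matrix.vecMul, dotProduct, Fin.sum_univ_two]
  · linear_combination -(p 1) * hM
  · linear_combination (p 0) * hM

lemma ckLeft (hF : ∀ e ∈ I, (canonSubst A (I.erase e)).rank < (canonSubst A I).rank)
    (hL : ∀ x, x ᵥ* canonSubst A I = 0 → ∀ α β β', β ≠ β' → (α, β) ∈ I → (α, β') ∈ I →
      ∀ i, x (α, i) = 0)
    (hR : ∀ y, canonSubst A I *ᵥ y = 0 → ∀ β α α', α ≠ α' → (α, β) ∈ I → (α', β) ∈ I →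
      ∀ i, y (β, i) = 0)
    (h2 : ∀ β, (Finset.univ.filter fun α => (α, β) ∈ I).card ≤ 2)
    (x : Fin μ × Fin 2 → F) :
    x ᵥ* canonSubst A I = 0 ↔ ∀ α, (∀ β, (α, β) ∈ I → (fun i => x (α, i)) ᵥ* A α β = 0) ∧
      (∀ β β', β ≠ β' → (α, β) ∈ I → (α, β') ∈ I → (fun i => x (α, i)) = 0) := by
  constructor
  · intro hx α
    refine ⟨fun β hb => ?_, fun β β' hne h3 h4 => funext (hL x hx α β β' hne h3 h4)⟩
    by_cases hα : ∃ β', β' ≠ β ∧ (α, β') ∈ I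
    · obtain ⟨β', hne, hb'⟩ := hα
      have : (fun i => x (α, i)) = 0 := funext (hL x hx α β' β hne hb' hb)
      rw [this, Matrix.zero_vecMul]
    push Not at hα
    by_cases hβ : ∃ α', α' ≠ α ∧ (α', β) ∈ I
    · obtain ⟨α', hne, hb'⟩ := hβ
      have h3 : ∀ a, (a, β) ∈ I → a = α ∨ a = α' := by
        intro a ha
        by_contra hcon
        push Not at hcon
        have h5 : ({a, α, α'} : Finset (Fin μ)) ⊆ Finset.univ.filter fun α => (α, β) ∈ I := by
          intro z hz
          simp at hz
          rcases hz with rfl | rfl | rfl <;> simpa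
        have h6 := Finset.card_le_card h5
        rw [Finset.card_eq_three.2 ⟨a, α, α', hcon.1, hcon.2, hne.symm, rfl⟩] at h6
        have := h2 β
        omega
      have hsum : (fun i => x (α, i)) ᵥ* A α β + (fun i => x (α', i)) ᵥ* A α' β = 0 := by
        funext j
        have := congrFun hx (β, j)
        rw [ckVecMul, Fintype.sum_eq_add α α' hne.symm, if_pos hb, if_pos hb'] at this
        · exact this
        · rintro a ⟨ha, ha'⟩
          rw [if_neg]
          intro h
          rcases h3 a h with h | h
          · exact ha h
          · exact ha' h
      by_cases hα' : ∃ β', β' ≠ β ∧ (α', β') ∈ I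
      · obtain ⟨β', hne', hb''⟩ := hα'
        have : (fun i => x (α', i)) = 0 := funext (hL x hx α' β' β hne' hb'' hb')
        rwa [this, Matrix.zero_vecMul, add_zero] at hsum
      push Not at hα'
      have hd := ckFull A I hF α α' β hne hb hb'
        (fun β' h => by_contra fun hn => hα β' hn h)
      have hd' := ckFull A I hF α' α β hne.symm hb' hb
        (fun β' h => by_contra fun hn => hα' β' hn h)
      have c1 := ckCross _ hd (fun i => x (α, i))
      have c2 := ckCross _ hd' (-(fun i => x (α', i)))
      have hu : (-(fun i => x (α', i))) ᵥ* A α' β = (fun i => x (α, i)) ᵥ* A α β := by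
        rw [Matrix.neg_vecMul]
        exact (eq_neg_of_add_eq_zero_left hsum).symm
      rw [hu] at c2
      generalize (fun i => x (α, i)) ᵥ* A α β = u at *
      let y : Fin ν × Fin 2 → F := fun q => if q.1 = β then ![-u 1, u 0] q.2 else 0
      have hy : (fun j => y (β, j)) = ![-u 1, u 0] := by funext j; simp [y]
      have hy' : ∀ b, b ≠ β → (fun j => y (b, j)) = 0 := by
        intro b hb; funext j; simp [y, hb]
      have hk : canonSubst A I *ᵥ y = 0 := by
        funext ⟨a, i⟩
        rw [ckMulVec]
        apply Finset.sum_eq_zero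
        intro b _
        split_ifs with hI
        · by_cases hbb : b = β
          · subst hbb
            rw [hy]
            rcases h3 a hI with rfl | rfl
            · rw [c1]; rfl
            · rw [c2]; rfl
          · rw [hy' b hbb, Matrix.mulVec_zero]; rfl
        · rfl
      have hz := hR y hk β α α' hne.symm hb hb'
      have z0 := hz 0
      have z1 := hz 1
      simp [y] at z0 z1
      funext j
      fin_cases j
      · exact z1
      · exact z0
    · push Not at hβ
      funext j
      have := congrFun hx (β, j)
      rw [ckVecMul, Finset.sum_eq_single α _ (by simp), if_pos hb] at this
      · exact this
      · intro a _ ha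
        rw [if_neg (hβ a ha)]
  · intro h
    funext ⟨β, j⟩
    rw [ckVecMul]
    apply Finset.sum_eq_zero
    intro a _
    split_ifs with hI
    · rw [(h a).1 β hI]; rfl
    · rfl
end

/-- For a matching `I` of a `(2×2)`-type generic partitioned matrix, the left kernel of the
canonical substitution `Ã_I` equals `⊕_α ker_I(α)` and its right kernel equals
`⊕_β ker_I(β)`. -/
theorem canonSubst_kernels {F : Type*} [Field F] {μ ν : ℕ}
    (A : Fin μ → Fin ν → Matrix (Fin 2) (Fin 2) F) (I : Finset (Fin μ × Fin ν))
    (hIE : ∀ e ∈ I, A e.1 e.2 ≠ 0)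
    (hmatch : ∀ e ∈ I, (genPartMat A (I.erase e)).rank < (genPartMat A I).rank) :
    (∀ x : Fin μ × Fin 2 → F,
      x ∈ LinearMap.ker (canonSubst A I).vecMulLinear ↔
        ∀ α, (fun i => x (α, i)) ∈ kerIL A I α) ∧
    (∀ y : Fin ν × Fin 2 → F,
      y ∈ LinearMap.ker (canonSubst A I).mulVecLin ↔
        ∀ β, (fun j => y (β, j)) ∈ kerIR A I β) := by
  obtain ⟨hF, hL, hR, d1, d2⟩ := ckProps A I hmatch
  constructor
  · intro x
    rw [LinearMap.mem_ker, Matrix.vecMulLinear_apply, ckLeft A I hF hL hR d2]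
    exact forall_congr' fun α => (ckKerIL A I hIE α _).symm
  · intro y
    let A' : Fin ν → Fin μ → Matrix (Fin 2) (Fin 2) F := fun β α => (A α β)ᵀ
    let T : Finset (Fin μ × Fin ν) → Finset (Fin ν × Fin μ) :=
      fun J => J.map (Equiv.prodComm _ _).toEmbedding
    have hT : ∀ J α β, (β, α) ∈ T J ↔ (α, β) ∈ J := by
      intro J α β
      simp [T]
    have hc : ∀ J, canonSubst A' (T J) = (canonSubst A J)ᵀ := by
      intro J
      ext ⟨β, j⟩ ⟨α, i⟩
      simp [canonSubst, A', hT]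
    have hE : ∀ α β, (T I).erase (β, α) = T (I.erase (α, β)) := by
      intro α β
      ext ⟨b, a⟩
      simp only [Finset.mem_erase, hT, ne_eq, Prod.mk.injEq]
      tauto
    have key := ckLeft A' (T I) ?_ ?_ ?_ ?_ y
    · rw [hc, Matrix.vecMul_transpose] at key
      rw [LinearMap.mem_ker, Matrix.mulVecLin_apply, key]
      refine forall_congr' fun β => ?_
      rw [ckKerIR A I hIE β]
      simp only [hT, A', Matrix.vecMul_transpose]
    · rintro ⟨β, α⟩ he
      rw [hE, hc, hc, Matrix.rank_transpose, Matrix.rank_transpose]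
      exact hF _ ((hT _ _ _).1 he)
    · intro x hx α β β' hne h1 h2
      rw [hc, Matrix.vecMul_transpose] at hx
      exact hR x hx α β β' hne ((hT _ _ _).1 h1) ((hT _ _ _).1 h2)
    · intro x hx α β β' hne h1 h2
      rw [hc, Matrix.mulVec_transpose] at hx
      exact hL x hx α β β' hne ((hT _ _ _).1 h1) ((hT _ _ _).1 h2)
    · intro α
      simpa only [hT] using d1 α
end
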